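/- For every real number q > 1/2, ∫₀¹ (x^{2q−2} + 1)·log(x^q + 1)/(x^{2q} + 1) dx = (1/(16q))·(ψ'((4q−1)/(4q)) − ψ'((2q−1)/(4q))) − (1/q)·Σ_{n=0}^{∞} 2^n·Γ(n + 2 − 1/q)·Γ(n + 1/q)/(2n+1)! · (ψ(n + 2 − 1/q) − ψ(2n + 2)). -/

import Mathlib

/-- The digamma function ψ(x) = Γ'(x)/Γ(x). -/
noncomputable def digamma (x : ℝ) : ℝ := deriv Real.Gamma x / Real.Gamma x

/-- The trigamma function ψ'(x), the derivative of the digamma function. -/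
noncomputable def trigamma (x : ℝ) : ℝ := deriv digamma x

open MeasureTheory Set Filter Topology

lemma gdiff {x : ℝ} (hx : 0 < x) : DifferentiableAt ℝ Real.Gamma x :=
  Real.differentiableAt_Gamma (fun m => by
    have : (0:ℝ) ≤ m := Nat.cast_nonneg m
    linarith)

lemma beta_int {a b : ℝ} (ha : 0 < a) (hb : 0 < b) :
    IntegrableOn (fun x : ℝ => x ^ (a - 1) * (1 - x) ^ (b - 1)) (Ioo 0 1) ∧
    ∫ x in Ioo (0:ℝ) 1, x ^ (a - 1) * (1 - x) ^ (b - 1) =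
      Real.Gamma a * Real.Gamma b / Real.Gamma (a + b) := by
  have h1 := Complex.betaIntegral_convergent (u := a) (v := b) (by simpa) (by simpa)
  rw [intervalIntegrable_iff_integrableOn_Ioo_of_le zero_le_one] at h1
  have e : ∀ x ∈ Ioo (0:ℝ) 1, (x:ℂ) ^ ((a:ℂ) - 1) * (1 - (x:ℂ)) ^ ((b:ℂ) - 1)
      = ((x ^ (a - 1) * (1 - x) ^ (b - 1) : ℝ) : ℂ) := by
    rintro x ⟨h0, h1⟩
    push_cast [Complex.ofReal_cpow h0.le, Complex.ofReal_cpow (sub_nonneg.2 h1.le)]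
    rfl
  constructor
  · have h2 := (integrableOn_congr_fun e measurableSet_Ioo).1 h1
    exact h2.re
  · have h3 := ProbabilityTheory.beta_eq_betaIntegralReal a b ha hb
    rw [Complex.betaIntegral, intervalIntegral.integral_of_le zero_le_one,
      integral_Ioc_eq_integral_Ioo, setIntegral_congr_fun measurableSet_Ioo e,
      integral_complex_ofReal, Complex.ofReal_re] at h3
    exact h3.symm

lemma beta_log {a b : ℝ} (ha : 0 < a) (hb : 0 < b) :
    IntegrableOn (fun x : ℝ => x ^ (a - 1) * ((1 - x) ^ (b - 1) * Real.log (1 - x))) (Ioo 0 1) ∧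
    ∫ x in Ioo (0:ℝ) 1, x ^ (a - 1) * ((1 - x) ^ (b - 1) * Real.log (1 - x)) =
      Real.Gamma a * Real.Gamma b / Real.Gamma (a + b) * (digamma b - digamma (a + b)) := by
  have key := hasDerivAt_integral_of_dominated_loc_of_deriv_le
    (μ := volume.restrict (Ioo (0:ℝ) 1)) (x₀ := b) (s := Ioi (b/2))
    (F := fun (c x : ℝ) => x ^ (a - 1) * (1 - x) ^ (c - 1))
    (F' := fun (c x : ℝ) => x ^ (a - 1) * ((1 - x) ^ (c - 1) * Real.log (1 - x)))
    (bound := fun x => (4 / b) * (x ^ (a - 1) * (1 - x) ^ (b / 4 - 1)))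
    (Ioi_mem_nhds (by linarith))
    (Eventually.of_forall fun c => by
      apply Measurable.aestronglyMeasurable; fun_prop)
    (beta_int ha hb).1
    (by apply Measurable.aestronglyMeasurable; fun_prop)
    (by
      filter_upwards [ae_restrict_mem measurableSet_Ioo] with x hx c hc
      have hx0 : 0 < 1 - x := by linarith [hx.2]
      have hc : b / 2 < c := hc
      have hl := Real.abs_log_mul_self_rpow_lt (1 - x) (b / 4) hx0 (by linarith [hx.1])
        (by linarith)
      have hle : (1 - x) ^ (c - 1) ≤ (1 - x) ^ (b / 4) * (1 - x) ^ (b / 4 - 1) := by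
        rw [← Real.rpow_add hx0]
        exact Real.rpow_le_rpow_of_exponent_ge hx0 (by linarith [hx.1]) (by linarith)
      have p1 : 0 < x ^ (a - 1) := Real.rpow_pos_of_pos hx.1 _
      have p2 : 0 < (1 - x) ^ (c - 1) := Real.rpow_pos_of_pos hx0 _
      have p3 : 0 < (1 - x) ^ (b / 4) := Real.rpow_pos_of_pos hx0 _
      have p4 : 0 < (1 - x) ^ (b / 4 - 1) := Real.rpow_pos_of_pos hx0 _
      rw [Real.norm_eq_abs, abs_mul, abs_mul, abs_of_pos p1, abs_of_pos p2]
      rw [abs_mul, abs_of_pos p3] at hl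
      calc x ^ (a - 1) * ((1 - x) ^ (c - 1) * |Real.log (1 - x)|)
          ≤ x ^ (a - 1) * (((1 - x) ^ (b / 4) * (1 - x) ^ (b / 4 - 1)) * |Real.log (1 - x)|) := by
            gcongr
        _ = x ^ (a - 1) * (1 - x) ^ (b / 4 - 1) * (|Real.log (1 - x)| * (1 - x) ^ (b / 4)) := by
            ring
        _ ≤ x ^ (a - 1) * (1 - x) ^ (b / 4 - 1) * (1 / (b / 4)) := by gcongr
        _ = _ := by field_simp)
    ((beta_int ha (by linarith)).1.const_mul _)
    (by
      filter_upwards [ae_restrict_mem measurableSet_Ioo] with x hx c hc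
      have hx0 : 0 < 1 - x := by linarith [hx.2]
      have := ((hasDerivAt_id c).sub_const 1).const_rpow hx0
      convert! this.const_mul (x ^ (a - 1)) using 1
      simp only [id]
      ring)
  refine ⟨key.1, ?_⟩
  have hG : HasDerivAt (fun c => Real.Gamma a * Real.Gamma c / Real.Gamma (a + c))
      (Real.Gamma a * Real.Gamma b / Real.Gamma (a + b) * (digamma b - digamma (a + b))) b := by
    have d1 := (gdiff hb).hasDerivAt
    have d2 : HasDerivAt (fun c => Real.Gamma (a + c)) (deriv Real.Gamma (a + b)) b := by
      have := (gdiff (add_pos ha hb)).hasDerivAt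
      simpa [Function.comp_def] using! this.comp b ((hasDerivAt_id b).const_add a)
    have n1 := (Real.Gamma_pos_of_pos hb).ne'
    have n2 := (Real.Gamma_pos_of_pos (add_pos ha hb)).ne'
    convert! (d1.const_mul (Real.Gamma a)).div d2 n2 using 1
    simp only [digamma]
    field_simp
  refine key.2.unique (hG.congr_of_eventuallyEq ?_)
  filter_upwards [Ioi_mem_nhds hb] with c hc
  exact (beta_int ha hc).2

lemma digamma_succ {x : ℝ} (hx : 0 < x) : digamma (x + 1) = digamma x + 1 / x := by
  have h1 : HasDerivAt (fun y => Real.Gamma (y + 1)) (deriv Real.Gamma (x + 1)) x := by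
    have := (gdiff (show 0 < x + 1 by linarith)).hasDerivAt
    simpa [Function.comp_def] using! this.comp x ((hasDerivAt_id x).add_const 1)
  have h2 : HasDerivAt (fun y => y * Real.Gamma y) (1 * Real.Gamma x + x * deriv Real.Gamma x) x :=
    (hasDerivAt_id x).mul (gdiff hx).hasDerivAt
  have h3 : (fun y => Real.Gamma (y + 1)) =ᶠ[𝓝 x] (fun y => y * Real.Gamma y) := by
    filter_upwards [Ioi_mem_nhds hx] with y hy
    exact Real.Gamma_add_one (ne_of_gt hy)
  have h4 := h1.unique (h2.congr_of_eventuallyEq h3)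
  have n1 := (Real.Gamma_pos_of_pos hx).ne'
  simp only [digamma]
  rw [h4, Real.Gamma_add_one hx.ne']
  field_simp
  ring

lemma digamma_mono : MonotoneOn digamma (Ioi 0) := by
  have hd : ∀ x ∈ Ioi (0:ℝ), HasDerivAt (Real.log ∘ Real.Gamma) (digamma x) x := by
    intro x hx
    exact (gdiff hx).hasDerivAt.log (Real.Gamma_pos_of_pos hx).ne'
  have h := Real.convexOn_log_Gamma.monotoneOn_deriv (fun x hx => (hd x hx).differentiableAt)
  intro x hx y hy hxy
  have := h hx hy hxy
  rwa [(hd x hx).deriv, (hd y hy).deriv] at this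

lemma digamma_add_nat {x : ℝ} (hx : 0 < x) (N : ℕ) :
    digamma (x + N) = digamma x + ∑ n ∈ Finset.range N, 1 / (x + n) := by
  induction N with
  | zero => simp
  | succ k ih =>
    rw [Finset.sum_range_succ, Nat.cast_succ, ← add_assoc, digamma_succ (by positivity), ih]
    ring

lemma tendsto_inv_aux (c : ℝ) : Tendsto (fun N : ℕ => 1 / (c + N)) atTop (𝓝 0) := by
  simp only [one_div]
  exact tendsto_inv_atTop_zero.comp (tendsto_atTop_add_const_left _ _ tendsto_natCast_atTop_atTop)

lemma digamma_tendsto_aux {x : ℝ} (hx : 0 < x) (k : ℕ) :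
    Tendsto (fun N : ℕ => digamma (x + k + N) - digamma (x + N)) atTop (𝓝 0) := by
  have : (fun N : ℕ => digamma (x + k + N) - digamma (x + N)) =
      fun N : ℕ => ∑ n ∈ Finset.range k, 1 / ((x + n) + N) := by
    funext N
    rw [show x + k + N = (x + N) + k by ring, digamma_add_nat (by positivity)]
    simp only [add_sub_cancel_left]
    refine Finset.sum_congr rfl fun n _ => ?_
    ring_nf
  rw [this]
  have := tendsto_finsetSum (Finset.range k) (fun n _ => tendsto_inv_aux (x + n))
  simpa using this

/-- difference of digammas at comparable arguments tends to zero -/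
lemma digamma_tendsto {x y : ℝ} (hx : 0 < x) (hxy : x ≤ y) :
    Tendsto (fun N : ℕ => digamma (y + N) - digamma (x + N)) atTop (𝓝 0) := by
  obtain ⟨k, hk⟩ := exists_nat_ge (y - x)
  refine squeeze_zero (fun N => ?_) (fun N => ?_) (digamma_tendsto_aux hx k)
  · exact sub_nonneg.2 (digamma_mono (show 0 < x + (N:ℝ) by positivity)
      (show 0 < y + (N:ℝ) by have : 0 < y := by linarith
                             positivity) (by linarith))
  · have : 0 < y := by linarith
    exact sub_le_sub_right (digamma_mono (show 0 < y + (N:ℝ) by positivity)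
      (show 0 < x + k + (N:ℝ) by positivity) (by linarith)) _

lemma summable_aux {x : ℝ} (hx : 0 < x) : Summable fun n : ℕ => 1 / (x + n) ^ 2 := by
  have h := (Real.summable_nat_pow_inv (p := 2)).2 (by norm_num)
  refine (summable_nat_add_iff (f := fun n : ℕ => 1 / (x + n) ^ 2) 1).1 ?_
  refine Summable.of_nonneg_of_le (fun n => by positivity) (fun n => ?_) ((summable_nat_add_iff 1).2 h)
  rw [← one_div]
  push_cast
  exact one_div_le_one_div_of_le (by positivity)
    (pow_le_pow_left₀ (by positivity) (by linarith) 2)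

lemma digamma_diff_hasSum {x y : ℝ} (hx : 0 < x) (hxy : x ≤ y) :
    HasSum (fun n : ℕ => 1 / (x + n) - 1 / (y + n)) (digamma y - digamma x) := by
  have hy : 0 < y := by linarith
  rw [hasSum_iff_tendsto_nat_of_nonneg]
  · have := (digamma_tendsto hx hxy).const_sub (digamma y - digamma x)
    rw [sub_zero] at this
    refine this.congr fun N => ?_
    rw [digamma_add_nat hx, digamma_add_nat hy, Finset.sum_sub_distrib]
    ring
  · intro n
    rw [sub_nonneg]
    gcongr

lemma trigamma_eq {x : ℝ} (hx : 0 < x) : trigamma x = ∑' n : ℕ, 1 / (x + n) ^ 2 := by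
  have hx2 : 0 < x / 2 := by linarith
  have key := hasDerivAt_tsum_of_isPreconnected (𝕜 := ℝ) (t := Ioi (x / 2))
    (u := fun n : ℕ => 1 / (x / 2 + n) ^ 2) (y₀ := x) (y := x)
    (g := fun (n : ℕ) y => 1 / (x / 2 + n) - 1 / (y + n))
    (g' := fun (n : ℕ) y => 1 / (y + n) ^ 2)
    (summable_aux hx2) isOpen_Ioi isPreconnected_Ioi
    (fun n y hy => by
      have hy' : 0 < y + n := by
        have : x / 2 < y := hy
        have : 0 < y := by linarith
        positivity
      have := (((hasDerivAt_id y).add_const (n:ℝ)).inv hy'.ne').const_sub (1 / (x / 2 + n))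
      simp only [one_div] at this ⊢
      convert! this using 1
      simp [neg_div])
    (fun n y hy => by
      have hy : x / 2 < y := hy
      rw [Real.norm_of_nonneg (by positivity)]
      gcongr)
    (show x / 2 < x by linarith)
    (digamma_diff_hasSum hx2 (by linarith)).summable
    (show x / 2 < x by linarith)
  rw [trigamma]
  have h2 : (fun z => ∑' n : ℕ, (1 / (x / 2 + n) - 1 / (z + n))) =ᶠ[𝓝 x]
      fun z => digamma z - digamma (x / 2) := by
    filter_upwards [Ioi_mem_nhds (show x / 2 < x by linarith)] with z hz
    exact (digamma_diff_hasSum hx2 (le_of_lt hz)).tsum_eq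
  have h3 := (key.congr_of_eventuallyEq h2.symm).add_const (digamma (x / 2))
  simpa using h3.deriv

lemma log_int {p : ℝ} (hp : 0 < p) :
    IntegrableOn (fun v : ℝ => v ^ (p - 1) * (-Real.log v)) (Ioo 0 1) ∧
    ∫ v in Ioo (0:ℝ) 1, v ^ (p - 1) * (-Real.log v) = 1 / p ^ 2 := by
  obtain ⟨h1, h2⟩ := beta_log one_pos hp
  simp only [sub_self, Real.rpow_zero, one_mul] at h1 h2
  rw [← intervalIntegrable_iff_integrableOn_Ioo_of_le zero_le_one] at h1
  rw [← integral_Ioc_eq_integral_Ioo, ← intervalIntegral.integral_of_le zero_le_one] at h2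
  constructor
  · rw [← intervalIntegrable_iff_integrableOn_Ioo_of_le zero_le_one]
    have := (h1.comp_sub_left 1).neg.symm
    simp only [sub_zero, sub_self, sub_sub_cancel] at this
    refine this.congr (fun x _ => ?_)
    simp
  · rw [← integral_Ioc_eq_integral_Ioo, ← intervalIntegral.integral_of_le zero_le_one]
    have h3 := intervalIntegral.integral_comp_sub_left (a := 0) (b := 1)
      (fun v : ℝ => v ^ (p - 1) * (-Real.log v)) 1
    simp only [sub_zero, sub_self] at h3
    rw [← h3]
    simp only [mul_neg, intervalIntegral.integral_neg, h2, add_comm 1 p, digamma_succ hp,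
      Real.Gamma_add_one hp.ne', Real.Gamma_one]
    have := (Real.Gamma_pos_of_pos hp).ne'
    field_simp
    ring

lemma trig_int {c : ℝ} (hc : 0 < c) :
    IntegrableOn (fun v : ℝ => v ^ (c - 1) * (-Real.log v) / (1 + v ^ 2)) (Ioo 0 1) ∧
    ∫ v in Ioo (0:ℝ) 1, v ^ (c - 1) * (-Real.log v) / (1 + v ^ 2) =
      1 / 16 * (trigamma (c / 4) - trigamma (c / 4 + 1 / 2)) := by
  constructor
  · refine Integrable.mono' (log_int hc).1
      (by apply Measurable.aestronglyMeasurable; fun_prop) ?_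
    filter_upwards [ae_restrict_mem measurableSet_Ioo] with v hv
    have p1 : 0 < v ^ (c - 1) := Real.rpow_pos_of_pos hv.1 _
    have p2 : Real.log v ≤ 0 := Real.log_nonpos hv.1.le hv.2.le
    have p3 : 0 ≤ v ^ (c - 1) * (-Real.log v) := mul_nonneg p1.le (by linarith)
    rw [Real.norm_of_nonneg (by positivity)]
    exact div_le_self p3 (by nlinarith)
  have hn : ∀ n : ℕ, 0 < c + 4 * n := fun n => by positivity
  have hn2 : ∀ n : ℕ, 0 < c + 4 * n + 2 := fun n => by positivity
  let f : ℕ → ℝ → ℝ := fun n v =>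
    v ^ (c + 4 * n - 1) * (-Real.log v) - v ^ (c + 4 * n + 2 - 1) * (-Real.log v)
  have hf : ∀ n, ∀ v ∈ Ioo (0:ℝ) 1, f n v =
      (v ^ (c - 1) * (-Real.log v) * (1 - v ^ 2)) * (v ^ 4) ^ n := by
    intro n v hv
    have e1 : v ^ (c + 4 * n - 1) = v ^ (c - 1) * (v ^ 4) ^ n := by
      rw [← pow_mul, ← Real.rpow_add_natCast hv.1.ne']
      congr 1; push_cast; ring
    have e2 : v ^ (c + 4 * n + 2 - 1) = v ^ (c - 1) * (v ^ 4) ^ n * v ^ 2 := by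
      rw [← e1, ← Real.rpow_add_natCast hv.1.ne']
      congr 1; push_cast; ring
    simp only [f, e1, e2]
    ring
  have hfi : ∀ n, IntegrableOn (f n) (Ioo 0 1) := fun n =>
    (log_int (hn n)).1.sub (log_int (hn2 n)).1
  have hfv : ∀ n, ∫ v in Ioo (0:ℝ) 1, f n v =
      1 / 16 * (1 / (c / 4 + n) ^ 2 - 1 / (c / 4 + 1 / 2 + n) ^ 2) := by
    intro n
    rw [integral_sub (log_int (hn n)).1 (log_int (hn2 n)).1, (log_int (hn n)).2,
      (log_int (hn2 n)).2]
    have a1 : c + 4 * n = 4 * (c / 4 + n) := by ring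
    have a2 : c + 4 * n + 2 = 4 * (c / 4 + 1 / 2 + n) := by ring
    rw [a2, a1, mul_pow, mul_pow, one_div_mul_eq_div]
    have : c / 4 + n ≠ 0 := by positivity
    have : c / 4 + 1 / 2 + n ≠ 0 := by positivity
    field_simp
    ring
  have hs : HasSum (fun n : ℕ => 1 / 16 * (1 / (c / 4 + n) ^ 2 - 1 / (c / 4 + 1 / 2 + n) ^ 2))
      (1 / 16 * (trigamma (c / 4) - trigamma (c / 4 + 1 / 2))) := by
    have q1 : 0 < c / 4 := by positivity
    have q2 : 0 < c / 4 + 1 / 2 := by positivity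
    rw [trigamma_eq q1, trigamma_eq q2]
    exact ((summable_aux q1).hasSum.sub (summable_aux q2).hasSum).mul_left _
  have key := hasSum_integral_of_summable_integral_norm (μ := volume.restrict (Ioo (0:ℝ) 1))
    (F := f) hfi (by
      refine hs.summable.congr fun n => ?_
      rw [← hfv n]
      refine setIntegral_congr_fun measurableSet_Ioo fun v hv => ?_
      have p1 : 0 < v ^ (c - 1) := Real.rpow_pos_of_pos hv.1 _
      have p2 : Real.log v ≤ 0 := Real.log_nonpos hv.1.le hv.2.le
      have p3 : 0 ≤ v ^ (c - 1) * (-Real.log v) := mul_nonneg p1.le (by linarith)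
      have p4 : 0 ≤ 1 - v ^ 2 := by nlinarith [hv.1, hv.2]
      have : 0 ≤ f n v := by rw [hf n v hv]; have := hv.1; positivity
      exact (Real.norm_of_nonneg this).symm)
  simp only [hfv] at key
  rw [← key.unique hs]
  refine setIntegral_congr_fun measurableSet_Ioo fun v hv => ?_
  have hv4 : v ^ 4 < 1 := pow_lt_one₀ hv.1.le hv.2 (by norm_num)
  have : HasSum (fun n => f n v)
      ((v ^ (c - 1) * (-Real.log v) * (1 - v ^ 2)) * (1 - v ^ 4)⁻¹) := by
    simp only [fun n => hf n v hv]
    exact (hasSum_geometric_of_lt_one (by positivity) hv4).mul_left _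
  simp only [this.tsum_eq]
  have : 1 - v ^ 4 = (1 - v ^ 2) * (1 + v ^ 2) := by ring
  have h2 : 1 - v ^ 2 ≠ 0 := by nlinarith [hv.1, hv.2]
  rw [this]
  field_simp

lemma G_int {s : ℝ} (h0 : 0 < s) (h2 : s < 2) :
    IntegrableOn (fun u : ℝ => u ^ (s - 1) * ((1 - u) ^ (1 - s) * Real.log (1 - u)) /
      (1 - 2 * u * (1 - u))) (Ioo 0 1) ∧
    ∫ u in Ioo (0:ℝ) 1, u ^ (s - 1) * ((1 - u) ^ (1 - s) * Real.log (1 - u)) /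
      (1 - 2 * u * (1 - u)) = ∑' n : ℕ,
          (2 : ℝ) ^ n * Real.Gamma ((n : ℝ) + 2 - s) * Real.Gamma ((n : ℝ) + s)
            / (Nat.factorial (2 * n + 1))
          * (digamma ((n : ℝ) + 2 - s) - digamma (2 * (n : ℝ) + 2)) := by
  set f0 : ℝ → ℝ := fun u => u ^ (s - 1) * ((1 - u) ^ (1 - s) * Real.log (1 - u)) with hf0
  have i0 : IntegrableOn f0 (Ioo 0 1) := by
    have := (beta_log h0 (show 0 < 2 - s by linarith)).1
    rwa [show (2 - s - 1) = 1 - s by ring] at this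
  have hden : ∀ u : ℝ, 1 / 2 ≤ 1 - 2 * u * (1 - u) := fun u => by nlinarith [sq_nonneg (2 * u - 1)]
  constructor
  · refine Integrable.mono' (i0.norm.const_mul 2)
      (by apply Measurable.aestronglyMeasurable; fun_prop) ?_
    filter_upwards with u
    have hd := hden u
    change ‖f0 u / _‖ ≤ _
    rw [norm_div, Real.norm_of_nonneg (show 0 ≤ 1 - 2 * u * (1 - u) by linarith),
      div_le_iff₀ (by linarith)]
    nlinarith [norm_nonneg (f0 u)]
  let f : ℕ → ℝ → ℝ := fun n u =>
    (2:ℝ) ^ n * (u ^ (n + s - 1) * ((1 - u) ^ (n + 2 - s - 1) * Real.log (1 - u)))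
  have hf : ∀ n, ∀ u ∈ Ioo (0:ℝ) 1, f n u = f0 u * (2 * u * (1 - u)) ^ n := by
    intro n u hu
    have hu1 : 0 < 1 - u := by linarith [hu.2]
    have e1 : u ^ (n + s - 1) = u ^ (s - 1) * u ^ n := by
      rw [← Real.rpow_add_natCast hu.1.ne']; congr 1; ring
    have e2 : (1 - u) ^ (n + 2 - s - 1) = (1 - u) ^ (1 - s) * (1 - u) ^ n := by
      rw [← Real.rpow_add_natCast hu1.ne']; congr 1; ring
    simp only [f, hf0, e1, e2, mul_pow]
    ring
  have hb : ∀ n : ℕ, 0 < (n:ℝ) + 2 - s := fun n => by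
    have : (0:ℝ) ≤ n := Nat.cast_nonneg n
    linarith
  have ha : ∀ n : ℕ, 0 < (n:ℝ) + s := fun n => by positivity
  have hfv : ∀ n : ℕ, ∫ u in Ioo (0:ℝ) 1, f n u =
      (2 : ℝ) ^ n * Real.Gamma ((n : ℝ) + 2 - s) * Real.Gamma ((n : ℝ) + s)
            / (Nat.factorial (2 * n + 1))
          * (digamma ((n : ℝ) + 2 - s) - digamma (2 * (n : ℝ) + 2)) := by
    intro n
    simp only [f]
    rw [integral_const_mul, (beta_log (ha n) (hb n)).2,
      show (n:ℝ) + s + (n + 2 - s) = 2 * n + 2 by ring]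
    have : Real.Gamma (2 * n + 2) = (Nat.factorial (2 * n + 1)) := by
      rw [← Real.Gamma_nat_eq_factorial]; congr 1; push_cast; ring
    rw [this]
    ring
  have hq : ∀ u ∈ Ioo (0:ℝ) 1, 0 ≤ 2 * u * (1 - u) ∧ 2 * u * (1 - u) ≤ 1 / 2 := fun u hu =>
    ⟨mul_nonneg (by linarith [hu.1]) (by linarith [hu.2]), by linarith [hden u]⟩
  have key := hasSum_integral_of_dominated_convergence (μ := volume.restrict (Ioo (0:ℝ) 1))
    (F := f) (f := fun u => f0 u / (1 - 2 * u * (1 - u)))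
    (fun n u => ‖f0 u‖ * (1 / 2) ^ n)
    (fun n => by apply Measurable.aestronglyMeasurable; fun_prop)
    (fun n => by
      filter_upwards [ae_restrict_mem measurableSet_Ioo] with u hu
      rw [hf n u hu, norm_mul, norm_pow, Real.norm_of_nonneg (hq u hu).1]
      have := hq u hu
      gcongr
      · exact this.1
      · exact this.2)
    (by
      filter_upwards with u
      exact (summable_geometric_of_lt_one (by norm_num) (by norm_num)).mul_left _)
    (by
      simp only [tsum_mul_left]
      exact i0.norm.mul_const _)
    (by
      filter_upwards [ae_restrict_mem measurableSet_Ioo] with u hu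
      simp only [fun n => hf n u hu, div_eq_mul_inv]
      exact (hasSum_geometric_of_lt_one (hq u hu).1 (by linarith [(hq u hu).2])).mul_left _)
  simp only [hfv] at key
  exact key.tsum_eq.symm

lemma F_int {s : ℝ} (h0 : 0 < s) (h2 : s < 2) :
    IntegrableOn (fun t : ℝ => t ^ (s - 1) * Real.log (1 + t) / (1 + t ^ 2)) (Ioi 0) ∧
    ∫ t in Ioi (0:ℝ), t ^ (s - 1) * Real.log (1 + t) / (1 + t ^ 2) = - ∑' n : ℕ,
          (2 : ℝ) ^ n * Real.Gamma ((n : ℝ) + 2 - s) * Real.Gamma ((n : ℝ) + s)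
            / (Nat.factorial (2 * n + 1))
          * (digamma ((n : ℝ) + 2 - s) - digamma (2 * (n : ℝ) + 2)) := by
  obtain ⟨g1, g2⟩ := G_int h0 h2
  have him : (fun u : ℝ => u / (1 - u)) '' Ioo 0 1 = Ioi 0 := by
    ext t
    constructor
    · rintro ⟨u, hu, rfl⟩
      exact div_pos hu.1 (by linarith [hu.2])
    · intro ht
      have ht : 0 < t := ht
      refine ⟨t / (1 + t), ⟨by positivity, by rw [div_lt_one (by positivity)]; linarith⟩, ?_⟩
      simp only
      field_simp
      ring
  have hinj : InjOn (fun u : ℝ => u / (1 - u)) (Ioo 0 1) := by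
    intro x hx y hy h
    have hx1 : 1 - x ≠ 0 := by linarith [hx.2]
    have hy1 : 1 - y ≠ 0 := by linarith [hy.2]
    simp only at h
    rw [div_eq_div_iff hx1 hy1] at h
    linarith
  have hder : ∀ x ∈ Ioo (0:ℝ) 1, HasDerivWithinAt (fun u : ℝ => u / (1 - u))
      (1 / (1 - x) ^ 2) (Ioo 0 1) x := by
    intro x hx
    have hx1 : 1 - x ≠ 0 := by linarith [hx.2]
    have := ((hasDerivAt_id x).div ((hasDerivAt_id x).const_sub 1) hx1).hasDerivWithinAt
      (s := Ioo 0 1)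
    convert! this using 1
    simp
  have heq : ∀ u ∈ Ioo (0:ℝ) 1, |1 / (1 - u) ^ 2| •
      ((u / (1 - u)) ^ (s - 1) * Real.log (1 + u / (1 - u)) / (1 + (u / (1 - u)) ^ 2)) =
      -(u ^ (s - 1) * ((1 - u) ^ (1 - s) * Real.log (1 - u)) / (1 - 2 * u * (1 - u))) := by
    intro u hu
    have hu1 : 0 < 1 - u := by linarith [hu.2]
    have e1 : 1 + u / (1 - u) = (1 - u)⁻¹ := by field_simp; ring
    have hd : 1 - 2 * u * (1 - u) ≠ 0 := by nlinarith [sq_nonneg (2 * u - 1)]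
    rw [e1, Real.log_inv, Real.div_rpow hu.1.le hu1.le, abs_of_pos (by positivity), smul_eq_mul,
      show (1 - s) = -(s - 1) by ring, Real.rpow_neg hu1.le]
    have hd2 : 1 + (u / (1 - u)) ^ 2 = (1 - 2 * u * (1 - u)) / (1 - u) ^ 2 := by
      field_simp; ring
    rw [hd2]
    have := Real.rpow_pos_of_pos hu1 (s - 1)
    field_simp
  constructor
  · rw [← him, integrableOn_image_iff_integrableOn_abs_deriv_smul measurableSet_Ioo hder hinj,
      integrableOn_congr_fun heq measurableSet_Ioo]
    exact g1.neg
  · rw [← him, integral_image_eq_integral_abs_deriv_smul measurableSet_Ioo hder hinj,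
      setIntegral_congr_fun measurableSet_Ioo heq, integral_neg, g2]

lemma subst_negpow {p : ℝ} (hp : p < 0) (g : ℝ → ℝ) :
    (IntegrableOn g (Ioi 1) ↔
      IntegrableOn (fun x : ℝ => |p * x ^ (p - 1)| • g (x ^ p)) (Ioo 0 1)) ∧
    ∫ y in Ioi (1:ℝ), g y = ∫ x in Ioo (0:ℝ) 1, |p * x ^ (p - 1)| • g (x ^ p) := by
  have him : (fun x : ℝ => x ^ p) '' Ioo 0 1 = Ioi 1 := by
    ext t
    constructor
    · rintro ⟨u, hu, rfl⟩
      exact Real.one_lt_rpow_of_pos_of_lt_one_of_neg hu.1 hu.2 hp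
    · intro ht
      have ht : 1 < t := ht
      refine ⟨t ^ p⁻¹, ⟨by positivity, Real.rpow_lt_one_of_one_lt_of_neg ht (inv_lt_zero.2 hp)⟩, ?_⟩
      exact Real.rpow_inv_rpow (by linarith) hp.ne
  have hinj : InjOn (fun x : ℝ => x ^ p) (Ioo 0 1) :=
    (Real.rpow_left_injOn hp.ne).mono fun x hx => hx.1.le
  have hder : ∀ x ∈ Ioo (0:ℝ) 1, HasDerivWithinAt (fun x : ℝ => x ^ p)
      (p * x ^ (p - 1)) (Ioo 0 1) x := fun x hx =>
    (Real.hasDerivAt_rpow_const (Or.inl hx.1.ne')).hasDerivWithinAt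
  rw [← him]
  exact ⟨integrableOn_image_iff_integrableOn_abs_deriv_smul measurableSet_Ioo hder hinj g,
    integral_image_eq_integral_abs_deriv_smul measurableSet_Ioo hder hinj g⟩

lemma subst_pospow {p : ℝ} (hp : 0 < p) (g : ℝ → ℝ) :
    (IntegrableOn g (Ioo 0 1) ↔
      IntegrableOn (fun x : ℝ => |p * x ^ (p - 1)| • g (x ^ p)) (Ioo 0 1)) ∧
    ∫ y in Ioo (0:ℝ) 1, g y = ∫ x in Ioo (0:ℝ) 1, |p * x ^ (p - 1)| • g (x ^ p) := by
  have him : (fun x : ℝ => x ^ p) '' Ioo 0 1 = Ioo 0 1 := by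
    ext t
    constructor
    · rintro ⟨u, hu, rfl⟩
      exact ⟨Real.rpow_pos_of_pos hu.1 _, Real.rpow_lt_one hu.1.le hu.2 hp⟩
    · intro ht
      refine ⟨t ^ p⁻¹, ⟨Real.rpow_pos_of_pos ht.1 _, Real.rpow_lt_one ht.1.le ht.2 (inv_pos.2 hp)⟩, ?_⟩
      exact Real.rpow_inv_rpow ht.1.le hp.ne'
  have hinj : InjOn (fun x : ℝ => x ^ p) (Ioo 0 1) :=
    (Real.rpow_left_injOn hp.ne').mono fun x hx => hx.1.le
  have hder : ∀ x ∈ Ioo (0:ℝ) 1, HasDerivWithinAt (fun x : ℝ => x ^ p)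
      (p * x ^ (p - 1)) (Ioo 0 1) x := fun x hx =>
    (Real.hasDerivAt_rpow_const (Or.inl hx.1.ne')).hasDerivWithinAt
  have h1 := integrableOn_image_iff_integrableOn_abs_deriv_smul measurableSet_Ioo hder hinj g
  have h2 := integral_image_eq_integral_abs_deriv_smul measurableSet_Ioo hder hinj g
  rw [him] at h1 h2
  exact ⟨h1, h2⟩

lemma L_int {s : ℝ} (h2 : s < 2) :
    IntegrableOn (fun t : ℝ => t ^ (s - 1) * Real.log t / (1 + t ^ 2)) (Ioi 1) ∧
    ∫ t in Ioi (1:ℝ), t ^ (s - 1) * Real.log t / (1 + t ^ 2) =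
      1 / 16 * (trigamma ((2 - s) / 4) - trigamma ((2 - s) / 4 + 1 / 2)) := by
  obtain ⟨t1, t2⟩ := trig_int (show 0 < 2 - s by linarith)
  obtain ⟨s1, s2⟩ := subst_negpow (show (-1:ℝ) < 0 by norm_num)
    (fun t : ℝ => t ^ (s - 1) * Real.log t / (1 + t ^ 2))
  have heq : ∀ v ∈ Ioo (0:ℝ) 1, |(-1) * v ^ ((-1:ℝ) - 1)| •
      ((v ^ (-1:ℝ)) ^ (s - 1) * Real.log (v ^ (-1:ℝ)) / (1 + (v ^ (-1:ℝ)) ^ 2)) =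
      v ^ (2 - s - 1) * (-Real.log v) / (1 + v ^ 2) := by
    intro v hv
    have h0 := hv.1
    rw [show (-1:ℝ) - 1 = -((2:ℕ):ℝ) by norm_num, show 2 - s - 1 = -(s - 1) by ring,
      Real.rpow_neg_one, Real.rpow_neg h0.le, Real.rpow_neg h0.le, Real.rpow_natCast,
      Real.inv_rpow h0.le, Real.log_inv, abs_mul, abs_of_pos (by positivity : 0 < (v ^ 2)⁻¹)]
    have := Real.rpow_pos_of_pos h0 (s - 1)
    simp only [smul_eq_mul, abs_neg, abs_one]
    field_simp
    ring
  rw [s1, s2, integrableOn_congr_fun heq measurableSet_Ioo,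
    setIntegral_congr_fun measurableSet_Ioo heq]
  exact ⟨t1, t2⟩

theorem integral_log_rpow_half_two (q : ℝ) (hq : 1 / 2 < q) :
    (∫ x in (0:ℝ)..1, (x ^ (2 * q - 2) + 1) * Real.log (x ^ q + 1) / (x ^ (2 * q) + 1)) =
      (1 / (16 * q)) * (trigamma ((4 * q - 1) / (4 * q)) - trigamma ((2 * q - 1) / (4 * q)))
      - (1 / q) * ∑' n : ℕ,
          (2 : ℝ) ^ n * Real.Gamma ((n : ℝ) + 2 - 1 / q) * Real.Gamma ((n : ℝ) + 1 / q)
            / (Nat.factorial (2 * n + 1))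
          * (digamma ((n : ℝ) + 2 - 1 / q) - digamma (2 * (n : ℝ) + 2)) := by
  have hq0 : 0 < q := by linarith
  have hs0 : 0 < 1 / q := by positivity
  have hs2 : 1 / q < 2 := by rw [div_lt_iff₀ hq0]; linarith
  obtain ⟨f1, f2⟩ := F_int hs0 hs2
  obtain ⟨l1, l2⟩ := L_int hs2
  rw [show (4 * q - 1) / (4 * q) = (2 - 1 / q) / 4 + 1 / 2 by field_simp; ring,
    show (2 * q - 1) / (4 * q) = (2 - 1 / q) / 4 by field_simp]
  set S := ∑' n : ℕ, (2 : ℝ) ^ n * Real.Gamma ((n : ℝ) + 2 - 1 / q) * Real.Gamma ((n : ℝ) + 1 / q)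
            / (Nat.factorial (2 * n + 1))
          * (digamma ((n : ℝ) + 2 - 1 / q) - digamma (2 * (n : ℝ) + 2))
  set F : ℝ → ℝ := fun t => t ^ (1 / q - 1) * Real.log (1 + t) / (1 + t ^ 2) with hF
  set L : ℝ → ℝ := fun t => t ^ (1 / q - 1) * Real.log t / (1 + t ^ 2) with hL
  have fA : IntegrableOn F (Ioi 1) := f1.mono_set (Ioi_subset_Ioi zero_le_one)
  have fB : IntegrableOn F (Ioo 0 1) := f1.mono_set Ioo_subset_Ioi_self
  obtain ⟨a1, a2⟩ := subst_negpow (show -q < 0 by linarith) (fun t => F t - L t)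
  obtain ⟨b1, b2⟩ := subst_pospow hq0 F
  have ea : ∀ x ∈ Ioo (0:ℝ) 1, |(-q) * x ^ (-q - 1)| • (F (x ^ (-q)) - L (x ^ (-q))) =
      q * (x ^ (2 * q - 2) * Real.log (x ^ q + 1) / (x ^ (2 * q) + 1)) := by
    intro x hx
    have h0 := hx.1
    have hX := Real.rpow_pos_of_pos h0 q
    have e1 : (x ^ (-q)) ^ (1 / q - 1) = x ^ q / x := by
      rw [← Real.rpow_mul h0.le, ← Real.rpow_sub_one h0.ne']
      congr 1; field_simp; ring
    have e2 : x ^ (-q - 1) = (x ^ q)⁻¹ / x := by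
      rw [Real.rpow_sub_one h0.ne', Real.rpow_neg h0.le]
    have e3 : x ^ (2 * q) = (x ^ q) ^ 2 := by
      rw [← Real.rpow_mul_natCast h0.le]; congr 1; push_cast; ring
    have e4 : x ^ (2 * q - 2) = (x ^ q) ^ 2 / x ^ 2 := by
      rw [← e3, show (2:ℝ) = ((2:ℕ):ℝ) by norm_num, Real.rpow_sub_natCast h0.ne']
    have e5 : 1 + (x ^ q)⁻¹ = (x ^ q + 1) / x ^ q := by field_simp
    simp only [hF, hL]
    rw [e1, e2, e3, e4, Real.rpow_neg h0.le, e5, Real.log_inv,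
      Real.log_div (by positivity) (by positivity), abs_mul, abs_neg, abs_of_pos hq0,
      abs_of_pos (by positivity), smul_eq_mul]
    field_simp
    ring
  have eb : ∀ x ∈ Ioo (0:ℝ) 1, |q * x ^ (q - 1)| • F (x ^ q) =
      q * (Real.log (x ^ q + 1) / (x ^ (2 * q) + 1)) := by
    intro x hx
    have h0 := hx.1
    have hX := Real.rpow_pos_of_pos h0 q
    have e1 : (x ^ q) ^ (1 / q - 1) = x / x ^ q := by
      rw [← Real.rpow_mul h0.le, show q * (1 / q - 1) = 1 - q by field_simp,
        Real.rpow_sub h0, Real.rpow_one]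
    have e2 : x ^ (q - 1) = x ^ q / x := Real.rpow_sub_one h0.ne' _
    have e3 : x ^ (2 * q) = (x ^ q) ^ 2 := by
      rw [← Real.rpow_mul_natCast h0.le]; congr 1; push_cast; ring
    simp only [hF]
    rw [e1, e2, e3, abs_of_pos (by positivity), smul_eq_mul, add_comm 1 (x ^ q)]
    field_simp
    ring
  rw [integrableOn_congr_fun ea measurableSet_Ioo] at a1
  rw [integrableOn_congr_fun eb measurableSet_Ioo] at b1
  rw [setIntegral_congr_fun measurableSet_Ioo ea, integral_sub fA l1] at a2
  rw [setIntegral_congr_fun measurableSet_Ioo eb] at b2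
  have hsplit : ∫ t in Ioi (0:ℝ), F t = (∫ t in Ioo (0:ℝ) 1, F t) + ∫ t in Ioi (1:ℝ), F t := by
    rw [← integral_Ioc_eq_integral_Ioo, ← setIntegral_union (Ioc_disjoint_Ioi le_rfl)
      measurableSet_Ioi (f1.mono_set Ioc_subset_Ioi_self) fA, Ioc_union_Ioi_eq_Ioi zero_le_one]
  have htot : q * (∫ x in (0:ℝ)..1,
      (x ^ (2 * q - 2) + 1) * Real.log (x ^ q + 1) / (x ^ (2 * q) + 1)) =
      (∫ t in Ioi (0:ℝ), F t) - ∫ t in Ioi (1:ℝ), L t := by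
    rw [hsplit, b2, add_sub_assoc, a2, ← integral_add (b1.1 fB) (a1.1 (fA.sub l1)),
      intervalIntegral.integral_of_le zero_le_one, integral_Ioc_eq_integral_Ioo,
      ← integral_const_mul]
    congr 1
    funext x
    ring
  rw [f2, l2] at htot
  have : ∀ I : ℝ, I = 1 / q * (q * I) := fun I => by field_simp
  rw [this (∫ x in (0:ℝ)..1, _), htot]
  field_simp
  ring
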